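/- arXiv:math/0305352 — 2 statements merged into one kernel-verified Lean document; each statement's English description precedes it below -/
import Mathlib

section
/- The free product of a residually finite group and a group satisfying the Følner condition is sofic. That is, if G is residually finite and H satisfies the Følner condition, then G ∗ H is sofic. -/
/-- Two self-maps of a finite set `A` are `ε`-similar if the number of points where they
differ is at most `ε·|A|`. They are `(1-ε)`-different if they are not `(1-ε)`-similar. -/
def EpsSimilar {A : Type*} [Fintype A] (ε : ℝ) (e f : A → A) : Prop :=
  (Nat.card {a : A // e a ≠ f a} : ℝ) ≤ ε * Fintype.card A

/-- An `(F, ε)`-quasi-action of a group `G` on a finite set `A`: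
(a) `φ(ef)` is `ε`-similar to `φ(e)` followed by `φ(f)` for `e, f ∈ F`;
(b) `φ(1)` is `ε`-similar to the identity;
(c) for `1 ≠ e ∈ F`, `φ(e)` is `(1-ε)`-different from the identity. -/
def IsQuasiAction {G : Type*} [Group G] (F : Finset G) (ε : ℝ)
    {A : Type*} [Fintype A] (φ : G → A → A) : Prop :=
  (∀ e ∈ F, ∀ f ∈ F, EpsSimilar ε (φ (e * f)) (fun a => φ f (φ e a))) ∧
  EpsSimilar ε (φ 1) id ∧
  (∀ e ∈ F, e ≠ 1 → ¬ EpsSimilar (1 - ε) (φ e) id)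

/-- A group `G` is sofic if for every finite subset `F ⊆ G` and every `ε ∈ (0,1)` there is an
`(F, ε)`-quasi-action of `G` on some finite nonempty set. -/
def IsSofic (G : Type*) [Group G] : Prop :=
  ∀ (F : Finset G) (ε : ℝ), 0 < ε → ε < 1 →
    ∃ (A : Type) (_ : Fintype A) (_ : Nonempty A) (φ : G → A → A),
      IsQuasiAction F ε φ

/-- A group `M` satisfies the Følner condition (is amenable as a discrete group) if for every
finite `F ⊆ M` and every `ε > 0` there is a nonempty finite `A ⊆ M` with
`|A·g \ A| ≤ ε·|A|` for all `g ∈ F`. -/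
def FolnerCondition (M : Type*) [Group M] : Prop :=
  ∀ (F : Finset M) (ε : ℝ), 0 < ε →
    ∃ A : Finset M, A.Nonempty ∧
      ∀ g ∈ F, ((((fun a => a * g) '' (A : Set M)) \ (A : Set M)).ncard : ℝ) ≤ ε * A.card

/-!
A group is sofic as soon as it acts, for any finitely many nontrivial elements, on a set with a
nonempty finite subset which those elements almost preserve and on which they have almost no fixed
points: restrict the action to that subset. Residually finite groups act in this way on finite
quotients, and groups with the Følner condition on themselves.

Given such actions of `G` and `H`, let both groups act on the same set `V` by means of a product,
with finite subset `A`. A reduced word in `G ∗ H` moves most points of `A` at each step, but may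
return to its starting point. To prevent this, label the points of `V`, once for each factor, by
involutions `s (k, v)` of a finite group `P` that satisfy no short relations on `A`, and let the
factor `k` act on `V × P` by `(v, p) ↦ (f v, s (k, f v) * s (k, v) * p)`. The `P`-coordinate is then
multiplied by a nonempty product of labels in which adjacent labels differ: within a step because
the point moves, and between steps because the factor changes. Such a product is not `1`.
-/

open Equiv (Perm)
open Monoid (Coprod)
open scoped Finset

section EpsAlmostAll

variable {V W : Type*} {ε δ : ℝ} {A : Finset V} {p q : V → Prop}

/-- `p` holds at all points of the finite set `A` outside an exceptional set of at most `ε·|A|`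
points. The exceptional set is any finite set, so that it can be assembled from images, unions
and products. -/
def EpsAlmostAll (ε : ℝ) (A : Finset V) (p : V → Prop) : Prop :=
  ∃ B : Finset V, (#B : ℝ) ≤ ε * #A ∧ ∀ a ∈ A, a ∉ B → p a

namespace EpsAlmostAll

lemma of_forall (hε : 0 ≤ ε) (h : ∀ a ∈ A, p a) : EpsAlmostAll ε A p :=
  ⟨∅, by simp only [Finset.card_empty, Nat.cast_zero]; positivity, fun a ha _ => h a ha⟩

lemma mono (h : EpsAlmostAll ε A p) (hpq : ∀ a ∈ A, p a → q a) : EpsAlmostAll ε A q :=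
  let ⟨B, hB, hp⟩ := h
  ⟨B, hB, fun a ha haB => hpq a ha (hp a ha haB)⟩

lemma mono_eps (h : EpsAlmostAll δ A p) (hδε : δ ≤ ε) : EpsAlmostAll ε A p :=
  let ⟨B, hB, hp⟩ := h
  ⟨B, hB.trans (by gcongr), hp⟩

lemma and (hp : EpsAlmostAll ε A p) (hq : EpsAlmostAll δ A q) :
    EpsAlmostAll (ε + δ) A fun a => p a ∧ q a := by
  classical
  obtain ⟨B, hB, hp⟩ := hp
  obtain ⟨C, hC, hq⟩ := hq
  refine ⟨B ∪ C, ?_, fun a ha haBC => ?_⟩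
  · calc (#(B ∪ C) : ℝ) ≤ #B + #C := mod_cast Finset.card_union_le B C
      _ ≤ (ε + δ) * #A := by linarith
  · rw [Finset.notMem_union] at haBC
    exact ⟨hp a ha haBC.1, hq a ha haBC.2⟩

lemma comp_perm (h : EpsAlmostAll ε A p) (f : Perm V) :
    EpsAlmostAll ε A fun a => f a ∈ A → p (f a) := by
  obtain ⟨B, hB, hp⟩ := h
  refine ⟨B.map f.symm.toEmbedding, by rwa [Finset.card_map], fun a _ haB hfa => hp _ hfa ?_⟩
  contrapose! haB
  exact Finset.mem_map.2 ⟨f a, haB, f.symm_apply_apply a⟩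

lemma prod_left (h : EpsAlmostAll ε A p) (C : Finset W) :
    EpsAlmostAll ε (A ×ˢ C) fun z => p z.1 := by
  obtain ⟨B, hB, hp⟩ := h
  refine ⟨B ×ˢ C, ?_, fun z hz hzB => ?_⟩
  · simp only [Finset.card_product, Nat.cast_mul, ← mul_assoc]
    gcongr
  · rw [Finset.mem_product] at hz hzB
    exact hp z.1 hz.1 fun hzB' => hzB ⟨hzB', hz.2⟩

lemma prod_right (h : EpsAlmostAll ε A p) (C : Finset W) :
    EpsAlmostAll ε (C ×ˢ A) fun z => p z.2 := by
  obtain ⟨B, hB, hp⟩ := h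
  refine ⟨C ×ˢ B, ?_, fun z hz hzB => ?_⟩
  · simp only [Finset.card_product, Nat.cast_mul, mul_left_comm ε]
    gcongr
  · rw [Finset.mem_product] at hz hzB
    exact hp z.2 hz.2 fun hzB' => hzB ⟨hz.1, hzB'⟩

lemma of_map {C : Finset W} {f : W ↪ V} (h : EpsAlmostAll ε (C.map f) p) :
    EpsAlmostAll ε C fun c => p (f c) := by
  obtain ⟨B, hB, hp⟩ := h
  refine ⟨B.preimage f f.injective.injOn, ?_, fun c hc hcB =>
    hp _ (Finset.mem_map_of_mem f hc) fun hcB' => hcB (Finset.mem_preimage.2 hcB')⟩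
  rw [Finset.card_map] at hB
  refine le_trans (mod_cast ?_) hB
  exact Finset.card_le_card_of_injOn f (fun c hc => Finset.mem_preimage.1 hc) f.injective.injOn

lemma exists_mem (h : EpsAlmostAll ε A p) (hε : ε < 1) (hA : A.Nonempty) : ∃ a ∈ A, p a := by
  obtain ⟨B, hB, hp⟩ := h
  have hA_pos : (0 : ℝ) < #A := mod_cast hA.card_pos
  have hcard : (#B : ℝ) < #A := hB.trans_lt (mul_lt_of_lt_one_left hA_pos hε)
  obtain ⟨a, haA, haB⟩ := Finset.exists_mem_notMem_of_card_lt_card (Nat.cast_lt.1 hcard)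
  exact ⟨a, haA, hp a haA haB⟩

end EpsAlmostAll

lemma epsSimilar_iff_epsAlmostAll [Fintype V] {e f : V → V} :
    EpsSimilar ε e f ↔ EpsAlmostAll ε Finset.univ fun a => e a = f a := by
  classical
  rw [EpsSimilar, Nat.card_eq_fintype_card, Fintype.card_subtype]
  refine ⟨fun h => ⟨_, h, by simp⟩, fun ⟨B, hB, hef⟩ => le_trans (mod_cast ?_) hB⟩
  exact Finset.card_le_card fun a ha => by
    by_contra haB
    exact (Finset.mem_filter.1 ha).2 (hef a (Finset.mem_univ a) haB)

lemma not_epsSimilar_one_sub [Fintype V] [Nonempty V] {e f : V → V} (hδε : δ < ε)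
    (h : EpsAlmostAll δ Finset.univ fun a => e a ≠ f a) : ¬ EpsSimilar (1 - ε) e f := fun hef =>
  have ⟨_, _, hne, heq⟩ := (h.and (epsSimilar_iff_epsAlmostAll.1 hef)).exists_mem
    (by linarith) Finset.univ_nonempty
  hne heq

end EpsAlmostAll

section AlmostFree

/-- `f` moves all but at most `ε·|A|` points of `A` to a different point of `A`. -/
def EpsDisplaces {V : Type*} (ε : ℝ) (A : Finset V) (f : V → V) : Prop :=
  EpsAlmostAll ε A fun a => f a ∈ A ∧ f a ≠ a

/-- `G` has actions on possibly infinite sets with finite subsets that are at once almost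
invariant under, and almost free of fixed points of, any prescribed finitely many nontrivial
elements. Unlike in a quasi-action, the multiplicative law is exact. -/
def HasAlmostFreeActions.{v} (G : Type*) [Group G] : Prop :=
  ∀ (F : Finset G) (ε : ℝ), 0 < ε → ∃ (V : Type v) (ρ : G →* Perm V) (A : Finset V),
    A.Nonempty ∧ ∀ g ∈ F, g ≠ 1 → EpsDisplaces ε A (ρ g)

theorem hasAlmostFreeActions_of_residuallyFinite.{u} (G : Type u) [Group G]
    [Group.ResiduallyFinite G] : HasAlmostFreeActions.{u} G := by
  classical
  intro F ε hε
  have : Nonempty (FiniteIndexNormalSubgroup G) := ⟨.ofSubgroup ⊤⟩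
  choose! N hN using Group.exists_finiteIndexNormalSubgroup_notMem (G := G)
  let M : Subgroup G := ⨅ g ∈ F, (N g).toSubgroup
  have : M.Normal := Subgroup.normal_iInf_normal fun g => Subgroup.normal_iInf_normal fun _ =>
    inferInstance
  have : M.FiniteIndex := Subgroup.finiteIndex_iInf' _ fun g _ => inferInstance
  have := Fintype.ofFinite (G ⧸ M)
  refine ⟨G ⧸ M, (MulAction.toPermHom (G ⧸ M) (G ⧸ M)).comp (QuotientGroup.mk' M), Finset.univ,
    Finset.univ_nonempty, fun g hgF hg => .of_forall hε.le fun a _ => ⟨Finset.mem_univ _, ?_⟩⟩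
  intro hfix
  have hgM : g ∈ M := (QuotientGroup.eq_one_iff g).1 (mul_eq_right.1 hfix)
  exact hN g hg (Subgroup.mem_iInf.1 (Subgroup.mem_iInf.1 hgM g) hgF)

theorem FolnerCondition.hasAlmostFreeActions.{u} {H : Type u} [Group H] (hH : FolnerCondition H) :
    HasAlmostFreeActions.{u} H := by
  classical
  intro F ε hε
  obtain ⟨A, hA, hAF⟩ := hH (F.image (·⁻¹)) ε hε
  refine ⟨H, (MulAction.toPermHom Hᵐᵒᵖ H).comp (MulEquiv.inv' H).toMonoidHom, A, hA,
    fun g hg hg1 => ⟨(A.image (· * g⁻¹) \ A).map (Equiv.mulRight g).toEmbedding, ?_, ?_⟩⟩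
  · rw [Finset.card_map]
    have hcard := hAF g⁻¹ (Finset.mem_image_of_mem _ hg)
    rwa [← Finset.coe_image, ← Finset.coe_sdiff, Set.ncard_coe_finset] at hcard
  · intro a ha hbad
    refine ⟨?_, mul_ne_left.2 (inv_ne_one.2 hg1)⟩
    contrapose! hbad
    exact Finset.mem_map.2 ⟨a * g⁻¹, Finset.mem_sdiff.2 ⟨Finset.mem_image_of_mem _ ha, hbad⟩,
      inv_mul_cancel_right a g⟩

/-- The self-map of `B` that follows `f` through the embedding `ι` wherever `f` stays in the range
of `ι`, and fixes the other points. -/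
noncomputable def compress {B V : Type*} (ι : B ↪ V) (f : V → V) (b : B) : B :=
  Function.extend ι id (fun _ => b) (f (ι b))

lemma compress_eq {B V : Type*} {ι : B ↪ V} {f : V → V} {b c : B} (h : f (ι b) = ι c) :
    compress ι f b = c := by
  rw [compress, h, ι.injective.extend_apply, id]

-- Quasi-actions compose from left to right, hence the inverses.
theorem isQuasiAction_compress {G V B : Type*} [Group G] [Fintype B] [Nonempty B]
    {ρ : G →* Perm V} {ι : B ↪ V} {F : Finset G} {ε : ℝ} (hε : 0 < ε)
    (h : ∀ g ∈ F, g ≠ 1 → EpsDisplaces (ε / 2) (Finset.univ.map ι) (ρ g⁻¹)) :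
    IsQuasiAction F ε fun g => compress ι (ρ g⁻¹) := by
  have hstay (g) (hg : g ∈ F) :
      EpsAlmostAll (ε / 2) (Finset.univ.map ι) fun v => ρ g⁻¹ v ∈ Finset.univ.map ι := by
    rcases eq_or_ne g 1 with rfl | hg1
    · exact .of_forall (by positivity) fun v hv => by simpa using hv
    · exact (h g hg hg1).mono fun _ _ => And.left
  refine ⟨fun e he f hf => ?_, ?_, fun g hg hg1 => ?_⟩
  · have hstay' := (hstay e he).and ((hstay f hf).comp_perm (ρ e⁻¹))
    rw [add_halves] at hstay'
    refine epsSimilar_iff_epsAlmostAll.2 (hstay'.of_map.mono fun b _ ⟨hb, hb'⟩ => ?_)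
    obtain ⟨c, -, hc⟩ := Finset.mem_map.1 hb
    obtain ⟨d, -, hd⟩ := Finset.mem_map.1 (hb' hb)
    calc compress ι (ρ (e * f)⁻¹) b = d := compress_eq (by simpa using hd.symm)
      _ = compress ι (ρ f⁻¹) c := (compress_eq (hc ▸ hd.symm)).symm
      _ = compress ι (ρ f⁻¹) (compress ι (ρ e⁻¹) b) := by rw [compress_eq hc.symm]
  · exact epsSimilar_iff_epsAlmostAll.2 (.of_forall hε.le fun b _ => compress_eq (by simp))
  · refine not_epsSimilar_one_sub (half_lt_self hε) ((h g hg hg1).of_map.mono ?_)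
    rintro b - ⟨hb, hne⟩ heq
    obtain ⟨c, -, hc⟩ := Finset.mem_map.1 hb
    have hcb : c = b := (compress_eq hc.symm).symm.trans heq
    exact hne (hcb ▸ hc.symm)

theorem HasAlmostFreeActions.isSofic {G : Type*} [Group G] (hG : HasAlmostFreeActions G) :
    IsSofic G := by
  classical
  intro F ε hε _
  obtain ⟨V, ρ, A, hA, hAF⟩ := hG (F.image (·⁻¹)) (ε / 2) (half_pos hε)
  let ι : Fin #A ↪ V := A.equivFin.symm.toEmbedding.trans (.subtype _)
  have hι : Finset.univ.map ι = A := by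
    rw [← Finset.map_map, Finset.map_univ_equiv, ← Finset.attach_eq_univ, Finset.attach_map_val]
  have : Nonempty (Fin #A) := ⟨⟨0, hA.card_pos⟩⟩
  refine ⟨Fin #A, inferInstance, inferInstance, _,
    isQuasiAction_compress (ρ := ρ) (ι := ι) hε fun g hg hg1 => ?_⟩
  rw [hι]
  exact hAF g⁻¹ (Finset.mem_image_of_mem _ hg) (inv_ne_one.2 hg1)

end AlmostFree

section Toggle

variable {ι : Type*}

open scoped Classical in
/-- Multiplication by the involution `x` on words without repeated adjacent letters: cancel a
leading `x`, otherwise prepend `x`. Words of the maximal length `N` that do not start with `x`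
are fixed, which keeps the map an involution. -/
noncomputable def toggleHead (N : ℕ) (x : ι) (l : List ι) : List ι :=
  if l.head? = some x then l.tail else if l.length < N then x :: l else l

lemma toggleHead_of_isChain_cons {N : ℕ} {x : ι} {l : List ι} (hl : (x :: l).IsChain (· ≠ ·))
    (hN : l.length < N) : toggleHead N x l = x :: l := by
  have hhead : l.head? ≠ some x := fun hx => (List.isChain_cons.1 hl).1 x hx rfl
  rw [toggleHead, if_neg hhead, if_pos hN]

/-- The words over `ι` of length at most `N` without repeated adjacent letters, which are the
reduced words in the free product of copies of `ℤ/2` indexed by `ι`. -/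
abbrev BoundedWord (ι : Type*) (N : ℕ) : Type _ :=
  {l : List ι // l.IsChain (· ≠ ·) ∧ l.length ≤ N}

instance [Finite ι] (N : ℕ) : Finite (BoundedWord ι N) :=
  ((List.finite_length_le ι N).subset fun _ hl => hl.2).to_subtype

/-- `toggleHead` as a self-map of the bounded words. Composing these involutions along a bounded
word carries the empty word to that word, so they satisfy no short relations. -/
noncomputable def BoundedWord.toggle {N : ℕ} (x : ι) (l : BoundedWord ι N) : BoundedWord ι N where
  val := toggleHead N x l.1
  property := by
    obtain ⟨l, hl, hlN⟩ := l
    rw [toggleHead]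
    split_ifs with hx hN
    · exact ⟨hl.tail, by rw [List.length_tail]; exact (Nat.sub_le _ _).trans hlN⟩
    · refine ⟨List.isChain_cons.2 ⟨?_, hl⟩, hN⟩
      rintro y hy rfl
      exact hx hy
    · exact ⟨hl, hlN⟩

lemma BoundedWord.toggle_involutive {N : ℕ} (x : ι) :
    Function.Involutive (BoundedWord.toggle (N := N) x) := by
  rintro ⟨l, hl, hlN⟩
  refine Subtype.ext (?_ : toggleHead N x (toggleHead N x l) = l)
  by_cases hx : l.head? = some x
  · obtain ⟨l, rfl⟩ : ∃ t, l = x :: t := ⟨l.tail, List.eq_cons_of_mem_head? hx⟩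
    rw [toggleHead.eq_def N x (x :: l), if_pos hx]
    exact toggleHead_of_isChain_cons hl hlN
  · by_cases hN : l.length < N <;> simp [toggleHead, hx, hN]

lemma BoundedWord.prod_toggle_nil {N : ℕ} (l : BoundedWord ι N) :
    (l.1.map fun x => (toggle_involutive (N := N) x).toPerm).prod
      (⟨[], by simp⟩ : BoundedWord ι N) = l := by
  obtain ⟨l, hl, hlN⟩ := l
  induction l with
  | nil => rfl
  | cons x l ih =>
    rw [List.map_cons, List.prod_cons, Perm.mul_apply, ih hl.tail (Nat.le_of_succ_le hlN)]
    exact Subtype.ext (toggleHead_of_isChain_cons hl hlN)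

theorem exists_finite_group_involutions_no_short_relation_of_finite.{u} (ι : Type u) [Finite ι]
    (N : ℕ) :
    ∃ (P : Type u) (_ : Group P) (_ : Finite P) (s : ι → P), (∀ i, (s i)⁻¹ = s i) ∧
      ∀ l : List ι, l.IsChain (· ≠ ·) → l.length ≤ N → (l.map s).prod = 1 → l = [] := by
  refine ⟨Perm (BoundedWord ι N), inferInstance, inferInstance,
    fun i => (BoundedWord.toggle_involutive i).toPerm, fun i => rfl, fun l hl hlN hprod => ?_⟩
  have := BoundedWord.prod_toggle_nil ⟨l, hl, hlN⟩
  rw [hprod] at this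
  exact (congrArg Subtype.val this).symm

theorem exists_finite_group_involutions_no_short_relation.{u} {ι : Type u} (S : Finset ι) (N : ℕ) :
    ∃ (P : Type u) (_ : Group P) (_ : Finite P) (s : ι → P), (∀ i, (s i)⁻¹ = s i) ∧
      ∀ l : List ι, l.IsChain (· ≠ ·) → (∀ i ∈ l, i ∈ S) → l.length ≤ N →
        (l.map s).prod = 1 → l = [] := by
  classical
  obtain ⟨P, _, _, s, hs, hprod⟩ := exists_finite_group_involutions_no_short_relation_of_finite S N
  refine ⟨P, inferInstance, inferInstance, fun i => if hi : i ∈ S then s ⟨i, hi⟩ else 1,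
    fun i => ?_, fun l hl hlS hlN hl1 => ?_⟩
  · by_cases hi : i ∈ S <;> simp [hi, hs]
  · lift l to List S using hlS
    rw [List.isChain_map] at hl
    have hl1' : (l.map s).prod = 1 := by
      rw [← hl1, List.map_map]
      congr 2
      funext i
      simp
    rw [hprod l (hl.imp fun _ _ => mt (congrArg _)) (by simpa using hlN) hl1', List.map_nil]

end Toggle

section Skew

variable {X Y V P κ : Type*}

/-- The action of pairs of permutations on a product. -/
def prodPermHom : Perm X × Perm Y →* Perm (X × Y) where
  toFun f := f.1.prodCongr f.2
  map_one' := rfl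
  map_mul' _ _ := rfl

lemma EpsDisplaces.prodPermHom_left {ε : ℝ} {A : Finset X} {f : Perm X} (hf : EpsDisplaces ε A f)
    (B : Finset Y) : EpsDisplaces ε (A ×ˢ B) (prodPermHom (f, 1)) :=
  (hf.prod_left B).mono fun _ hz ⟨hmem, hne⟩ =>
    ⟨Finset.mk_mem_product hmem (Finset.mem_product.1 hz).2,
      fun hfix => hne (congrArg Prod.fst hfix)⟩

lemma EpsDisplaces.prodPermHom_right {ε : ℝ} {B : Finset Y} {f : Perm Y} (hf : EpsDisplaces ε B f)
    (A : Finset X) : EpsDisplaces ε (A ×ˢ B) (prodPermHom (1, f)) :=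
  (hf.prod_right A).mono fun _ hz ⟨hmem, hne⟩ =>
    ⟨Finset.mk_mem_product (Finset.mem_product.1 hz).1 hmem,
      fun hfix => hne (congrArg Prod.snd hfix)⟩

/-- The action of `Perm V` on the first factor of `V × P`, conjugated by `(v, p) ↦ (v, t v * p)`. -/
def skewPermHom [Group P] (t : V → P) : Perm V →* Perm (V × P) :=
  (MulAut.conj ((Equiv.refl V).prodShear fun v => Equiv.mulLeft (t v))⁻¹).toMonoidHom.comp
    (prodPermHom.comp (MonoidHom.inl _ _))

lemma skewPermHom_apply [Group P] (t : V → P) (f : Perm V) (z : V × P) :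
    skewPermHom t f z = (f z.1, (t (f z.1))⁻¹ * t z.1 * z.2) :=
  Prod.ext rfl (mul_assoc _ _ _).symm

/-- Starting from a point `v ∈ A`, applying the permutations in the list from right to left moves
the point at each step, and never leaves `A`. -/
def DisplacesAlong (A : Finset V) : List (Perm V) → V → Prop
  | [], v => v ∈ A
  | f :: l, v => DisplacesAlong A l v ∧ f (l.prod v) ∈ A ∧ f (l.prod v) ≠ l.prod v

lemma DisplacesAlong.prod_mem {A : Finset V} {l : List (Perm V)} {v : V}
    (h : DisplacesAlong A l v) : l.prod v ∈ A := by
  cases l with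
  | nil => exact h
  | cons f l => exact h.2.1

lemma epsAlmostAll_displacesAlong {A : Finset V} {δ : ℝ} {l : List (Perm V)}
    (hl : ∀ f ∈ l, EpsDisplaces δ A f) : EpsAlmostAll (l.length * δ) A (DisplacesAlong A l) := by
  induction l with
  | nil => exact .of_forall (by simp) fun v hv => hv
  | cons f l ih =>
    rw [List.forall_mem_cons] at hl
    have hstep := (ih hl.2).and (hl.1.comp_perm l.prod)
    rw [← add_one_mul] at hstep
    simpa using hstep.mono fun v _ ⟨hv, hfv⟩ => ⟨hv, hfv hv.prod_mem⟩

/-- The labels collected along the trajectory of `v` under a list of permutations with colours,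
applied from right to left: a step with colour `k` from `u` to `f u` contributes `(k, u)` and
`(k, f u)`. -/
def trajectoryLabels : List (κ × Perm V) → V → List (κ × V)
  | [], _ => []
  | (k, f) :: l, v =>
    (k, f ((l.map Prod.snd).prod v)) :: (k, (l.map Prod.snd).prod v) :: trajectoryLabels l v

lemma length_trajectoryLabels (l : List (κ × Perm V)) (v : V) :
    (trajectoryLabels l v).length = 2 * l.length := by
  induction l with
  | nil => rfl
  | cons a l ih => simp only [trajectoryLabels, List.length_cons, ih]; ring

lemma prod_skewPermHom_apply [Group P] {s : κ × V → P} (hs : ∀ i, (s i)⁻¹ = s i)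
    (l : List (κ × Perm V)) (z : V × P) :
    (l.map fun a => skewPermHom (fun v => s (a.1, v)) a.2).prod z =
      ((l.map Prod.snd).prod z.1, ((trajectoryLabels l z.1).map s).prod * z.2) := by
  induction l with
  | nil => simp [trajectoryLabels]
  | cons a l ih =>
    simp [ih, skewPermHom_apply, trajectoryLabels, hs, mul_assoc]

lemma mem_of_mem_trajectoryLabels {A : Finset V} {l : List (κ × Perm V)} {v : V}
    (hv : DisplacesAlong A (l.map Prod.snd) v) {i : κ × V} (hi : i ∈ trajectoryLabels l v) :
    i.2 ∈ A := by
  induction l with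
  | nil => simp [trajectoryLabels] at hi
  | cons a l ih =>
    obtain ⟨hv, hav, -⟩ := hv
    simp only [trajectoryLabels, List.mem_cons] at hi
    rcases hi with rfl | rfl | hi
    exacts [hav, hv.prod_mem, ih hv hi]

lemma isChain_trajectoryLabels {A : Finset V} {l : List (κ × Perm V)} {v : V}
    (hl : l.IsChain fun a b => a.1 ≠ b.1) (hv : DisplacesAlong A (l.map Prod.snd) v) :
    (trajectoryLabels l v).IsChain (· ≠ ·) := by
  induction l with
  | nil => exact .nil
  | cons a l ih =>
    obtain ⟨hv, -, hav⟩ := hv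
    refine .cons_cons (fun h => hav (congrArg Prod.snd h))
      (List.isChain_cons.2 ⟨fun i hi h => ?_, ih hl.tail hv⟩)
    cases l with
    | nil => simp [trajectoryLabels] at hi
    | cons b l =>
      obtain rfl : _ = i := Option.some_injective _ hi
      exact (List.isChain_cons_cons.1 hl).1 (Prod.mk.inj h).1

theorem epsDisplaces_prod_skewPermHom [Group P] [Fintype P] {A : Finset V}
    {s : κ × V → P} (hs : ∀ i, (s i)⁻¹ = s i) {N : ℕ}
    (hs_free : ∀ l : List (κ × V), l.IsChain (· ≠ ·) → (∀ i ∈ l, i.2 ∈ A) →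
      l.length ≤ 2 * N → (l.map s).prod = 1 → l = [])
    {l : List (κ × Perm V)} (hl : l.IsChain fun a b => a.1 ≠ b.1) (hl_ne : l ≠ [])
    (hlN : l.length ≤ N) {δ : ℝ} (hlδ : ∀ a ∈ l, EpsDisplaces δ A a.2) :
    EpsDisplaces (l.length * δ) (A ×ˢ Finset.univ)
      (l.map fun a => skewPermHom (fun v => s (a.1, v)) a.2).prod := by
  have hgood := epsAlmostAll_displacesAlong (l := l.map Prod.snd) (A := A) (δ := δ)
    (List.forall_mem_map.2 hlδ)
  rw [List.length_map] at hgood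
  refine (hgood.prod_left Finset.univ).mono fun z _ hz => ?_
  rw [prod_skewPermHom_apply hs]
  refine ⟨Finset.mk_mem_product hz.prod_mem (Finset.mem_univ _), fun hfix => hl_ne ?_⟩
  have hlabels : trajectoryLabels l z.1 = [] :=
    hs_free _ (isChain_trajectoryLabels hl hz) (fun _ => mem_of_mem_trajectoryLabels hz)
      (by rw [length_trajectoryLabels]; omega)
      (mul_eq_right.1 (congrArg Prod.snd hfix))
  simpa [hlabels] using length_trajectoryLabels l z.1

end Skew

section Coprod

variable {G H : Type*} [Group G] [Group H]

/-- The letters of the word alternate between the two factors and represent nontrivial elements. -/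
def IsReducedWord (L : List (G ⊕ H)) : Prop :=
  L.IsChain (fun a b => a.isLeft ≠ b.isLeft) ∧ ∀ a ∈ L, Coprod.mk (.of a) ≠ 1

lemma exists_mk_of_eq_mul_of_isLeft_eq {a b : G ⊕ H} (hab : a.isLeft = b.isLeft) :
    ∃ c : G ⊕ H, Coprod.mk (.of c) = Coprod.mk (.of a) * Coprod.mk (.of b) := by
  match a, b, hab with
  | .inl g, .inl g', _ => exact ⟨.inl (g * g'), map_mul Coprod.inl g g'⟩
  | .inr h, .inr h', _ => exact ⟨.inr (h * h'), map_mul Coprod.inr h h'⟩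

theorem exists_isReducedWord (w : Coprod G H) :
    ∃ L : List (G ⊕ H), IsReducedWord L ∧ Coprod.mk (FreeMonoid.ofList L) = w := by
  -- A shortest word for `w` is reduced.
  obtain ⟨L, hL, hmin⟩ := exists_minimalFor_of_wellFoundedLT
    (fun L : List (G ⊕ H) => Coprod.mk (FreeMonoid.ofList L) = w) List.length
    (Coprod.mk_surjective w)
  refine ⟨L, ⟨List.isChain_iff_forall_rel_of_append_cons_cons.2 ?_, fun a ha ha1 => ?_⟩, hL⟩
  · rintro a b L₁ L₂ rfl hab
    obtain ⟨c, hc⟩ := exists_mk_of_eq_mul_of_isLeft_eq hab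
    have := hmin (j := L₁ ++ c :: L₂) (by
      rw [← hL]
      simp [FreeMonoid.ofList_append, FreeMonoid.ofList_cons, hc, mul_assoc]) (by simp)
    simp at this
  · obtain ⟨L₁, L₂, rfl⟩ := List.append_of_mem ha
    have := hmin (j := L₁ ++ L₂) (by
      rw [← hL]
      simp [FreeMonoid.ofList_append, FreeMonoid.ofList_cons, ha1]) (by simp)
    simp at this

/-- The permutation by which a letter acts, coloured by the factor the letter comes from. -/
def colouredPerm {V : Type*} (ρ : G →* Perm V) (σ : H →* Perm V) : G ⊕ H → Bool × Perm V :=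
  Sum.elim (fun g => (true, ρ g)) (fun h => (false, σ h))

/-- The action of `G ∗ H` on `V × P` in which the two factors act through `ρ` and `σ`, twisted by
the labels of their own colour. -/
def twistedAction {V P : Type*} [Group P] (s : Bool × V → P) (ρ : G →* Perm V) (σ : H →* Perm V) :
    Coprod G H →* Perm (V × P) :=
  Coprod.lift ((skewPermHom fun v => s (true, v)).comp ρ)
    ((skewPermHom fun v => s (false, v)).comp σ)

lemma twistedAction_mk {V P : Type*} [Group P] (s : Bool × V → P) (ρ : G →* Perm V)
    (σ : H →* Perm V) (L : List (G ⊕ H)) :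
    twistedAction s ρ σ (Coprod.mk (FreeMonoid.ofList L)) =
      ((L.map (colouredPerm ρ σ)).map fun a => skewPermHom (fun v => s (a.1, v)) a.2).prod := by
  rw [twistedAction, Coprod.lift_apply_mk, FreeMonoid.lift_apply, FreeMonoid.toList_ofList,
    List.map_map]
  congr 2
  funext a
  cases a <;> rfl

lemma IsReducedWord.isChain_map_colouredPerm {V : Type*} {L : List (G ⊕ H)} (hL : IsReducedWord L)
    (ρ : G →* Perm V) (σ : H →* Perm V) :
    (L.map (colouredPerm ρ σ)).IsChain fun a b => a.1 ≠ b.1 := by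
  refine (List.isChain_map _).2 (hL.1.imp fun a b hab => ?_)
  cases a <;> cases b <;> simp_all [colouredPerm]

lemma IsReducedWord.ne_one_of_inl_mem {L : List (G ⊕ H)} (hL : IsReducedWord L) {g : G}
    (hg : .inl g ∈ L) : g ≠ 1 := by
  rintro rfl
  exact hL.2 _ hg (map_one Coprod.inl)

lemma IsReducedWord.ne_one_of_inr_mem {L : List (G ⊕ H)} (hL : IsReducedWord L) {h : H}
    (hh : .inr h ∈ L) : h ≠ 1 := by
  rintro rfl
  exact hL.2 _ hh (map_one Coprod.inr)

theorem HasAlmostFreeActions.exists_common.{v, w} (hG : HasAlmostFreeActions.{v} G)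
    (hH : HasAlmostFreeActions.{w} H) (E : Finset G) (F : Finset H) {ε : ℝ} (hε : 0 < ε) :
    ∃ (V : Type (max v w)) (ρ : G →* Perm V) (σ : H →* Perm V) (A : Finset V), A.Nonempty ∧
      (∀ g ∈ E, g ≠ 1 → EpsDisplaces ε A (ρ g)) ∧ ∀ h ∈ F, h ≠ 1 → EpsDisplaces ε A (σ h) := by
  obtain ⟨X, ρ, A, hA, hρ⟩ := hG E ε hε
  obtain ⟨Y, σ, B, hB, hσ⟩ := hH F ε hε
  exact ⟨X × Y, prodPermHom.comp ((MonoidHom.inl _ _).comp ρ),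
    prodPermHom.comp ((MonoidHom.inr _ _).comp σ), A ×ˢ B, hA.product hB,
    fun g hg hg1 => (hρ g hg hg1).prodPermHom_left B,
    fun h hh hh1 => (hσ h hh hh1).prodPermHom_right A⟩

theorem HasAlmostFreeActions.coprod.{v, w} (hG : HasAlmostFreeActions.{v} G)
    (hH : HasAlmostFreeActions.{w} H) : HasAlmostFreeActions.{max v w} (Coprod G H) := by
  classical
  intro F ε hε
  choose word hword hmk using exists_isReducedWord (G := G) (H := H)
  let letters : Finset (G ⊕ H) := F.biUnion fun w => (word w).toFinset
  let N : ℕ := F.sup fun w => (word w).length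
  obtain ⟨V, ρ, σ, A, hA, hρ, hσ⟩ :=
    hG.exists_common hH letters.toLeft letters.toRight (ε := ε / (N + 1)) (by positivity)
  obtain ⟨P, _, _, s, hs, hs_free⟩ :=
    exists_finite_group_involutions_no_short_relation ((Finset.univ : Finset Bool) ×ˢ A) (2 * N)
  have := Fintype.ofFinite P
  refine ⟨V × P, twistedAction s ρ σ, A ×ˢ Finset.univ, hA.product Finset.univ_nonempty,
    fun w hw hw1 => ?_⟩
  have hlength : (word w).length ≤ N := Finset.le_sup (f := fun w => (word w).length) hw
  have hdisplaces (a) (ha : a ∈ word w) : EpsDisplaces (ε / (N + 1)) A (colouredPerm ρ σ a).2 := by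
    have ha_mem : a ∈ letters := Finset.mem_biUnion.2 ⟨w, hw, List.mem_toFinset.2 ha⟩
    match a, ha, ha_mem with
    | .inl g, ha, hg => exact hρ g (Finset.mem_toLeft.2 hg) ((hword w).ne_one_of_inl_mem ha)
    | .inr h, ha, hh => exact hσ h (Finset.mem_toRight.2 hh) ((hword w).ne_one_of_inr_mem ha)
  have hne : word w ≠ [] := fun hnil => hw1 (by rw [← hmk w, hnil]; rfl)
  have hproduct := epsDisplaces_prod_skewPermHom hs
    (fun l hl hlA => hs_free l hl fun i hi =>
      Finset.mk_mem_product (Finset.mem_univ i.1) (hlA i hi))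
    ((hword w).isChain_map_colouredPerm ρ σ) (List.map_eq_nil_iff.not.2 hne)
    (by rwa [List.length_map]) (List.forall_mem_map.2 hdisplaces)
  rw [← twistedAction_mk, hmk, List.length_map] at hproduct
  refine hproduct.mono_eps ?_
  have hcast : ((word w).length : ℝ) ≤ N + 1 := by exact_mod_cast hlength.trans N.le_succ
  calc (word w).length * (ε / (N + 1)) ≤ (N + 1) * (ε / (N + 1)) := by gcongr
    _ = ε := by field_simp

end Coprod

/-- The free product of a residually finite group and a group satisfying the Følner
condition is sofic. -/
theorem isSofic_coprod_of_residuallyFinite_folner {G H : Type*} [Group G] [Group H]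
    (hG : ∀ g : G, g ≠ 1 → ∃ (K : Type) (_ : Group K) (_ : Finite K) (φ : G →* K), φ g ≠ 1)
    (hH : FolnerCondition H) :
    IsSofic (Monoid.Coprod G H) := by
  have := Group.residuallyFinite_of_forall_exists_finite_monoidHom hG
  exact ((hasAlmostFreeActions_of_residuallyFinite G).coprod hH.hasAlmostFreeActions).isSofic
end

section
/- Let K be a finitely generated residually finite group, let P be the group of finitary permutations of the set K, and let Q be the subgroup of the symmetric group on the set K generated by P together with all left translations x ↦ gx for g ∈ K. Then Q is an LEF group: for every finite subset F ⊆ Q there exist a finite group H and a map Ψ : Q → H such that Ψ is injective on F and Ψ(fg) = Ψ(f)·Ψ(g) for all f, g ∈ F. -/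
/-- The group `Q` generated by the finitary permutations of a group `K` together with the left
translations: the subgroup of `Equiv.Perm K` generated by the permutations moving only finitely
many points and the maps `x ↦ g * x`. -/
def finitaryWithTranslations (K : Type*) [Group K] : Subgroup (Equiv.Perm K) :=
  Subgroup.closure
    ({σ : Equiv.Perm K | {x : K | σ x ≠ x}.Finite} ∪ Set.range fun g : K => Equiv.mulLeft g)

/-!
Every `σ ∈ Q` agrees with a left translation `x ↦ k * x` off a finite set, and `k` can be chosen
multiplicatively in `σ`. Given a map `φ : K → H` to a finite group that is injective and
multiplicative on a large finite set, transport `σ` to the permutation of `H` that is the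
translation by `φ k` corrected on finitely many points of the image of `φ`. Whether the
transport separates two elements of `Q`, or respects their product, involves only finitely many
values of `φ`, so a large enough finite set serves any prescribed finite subset of `Q`. For
residually finite `K`, a finite quotient provides `φ`.
-/

open Filter Set
open Equiv (Perm)

/-- A group is LEF (locally embeddable into finite groups) if each of its finite subsets is mapped
injectively to a finite group by a map that respects the products of elements of the subset. As
the target is finite, it can be taken in the lowest universe. -/
def IsLEF (G : Type*) [Group G] : Prop :=
  ∀ F : Finset G, ∃ (H : Type) (_ : Group H) (_ : Finite H) (Ψ : G → H),
    InjOn Ψ ↑F ∧ ∀ f ∈ F, ∀ g ∈ F, Ψ (f * g) = Ψ f * Ψ g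

theorem IsLEF.exists_injOn_of_finite {G : Type*} [Group G] (hG : IsLEF G) {A : Set G}
    (hA : A.Finite) :
    ∃ (H : Type) (_ : Group H) (_ : Finite H) (φ : G → H),
      InjOn φ A ∧ ∀ a ∈ A, ∀ b ∈ A, φ (a * b) = φ a * φ b := by
  lift A to Finset G using hA
  exact hG A

theorem exists_finiteIndex_injOn_mk {G : Type*} [Group G] [Group.ResiduallyFinite G]
    {A : Set G} (hA : A.Finite) :
    ∃ N : Subgroup G, N.Normal ∧ N.FiniteIndex ∧ InjOn (QuotientGroup.mk : G → G ⧸ N) A := by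
  have := hA.offDiag.to_subtype
  choose N hN using fun p : A.offDiag =>
    Group.exists_finiteIndexNormalSubgroup_of_residuallyFinite p.1.1 p.1.2 p.2.2.2
  refine ⟨⨅ p, (N p).toSubgroup, Subgroup.normal_iInf_normal fun p => inferInstance,
    Subgroup.finiteIndex_iInf fun p => inferInstance, fun a ha b hb hab => ?_⟩
  by_contra hne
  refine hN ⟨(a, b), ha, hb, hne⟩ (QuotientGroup.eq.2 ?_)
  exact Subgroup.mem_iInf.1 (QuotientGroup.eq.1 hab) _

theorem IsLEF.of_residuallyFinite (G : Type*) [Group G] [Group.ResiduallyFinite G] :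
    IsLEF G := by
  intro F
  obtain ⟨N, _, _, hN⟩ := exists_finiteIndex_injOn_mk F.finite_toSet
  let e : G ⧸ N ≃* Shrink.{0} (G ⧸ N) := Shrink.mulEquiv.symm
  exact ⟨Shrink.{0} (G ⧸ N), inferInstance, inferInstance, fun g => e (g : G ⧸ N),
    e.injective.comp_injOn hN, fun f _ g _ => map_mul e (f : G ⧸ N) (g : G ⧸ N)⟩

theorem exists_finite_forall_eqOn_imp_eq {F α β : Type*} [FunLike F α β] {s : Set F}
    (hs : s.Finite) :
    ∃ W : Set α, W.Finite ∧ ∀ f ∈ s, ∀ g ∈ s, EqOn f g W → f = g := by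
  have := hs.offDiag.to_subtype
  choose w hw using fun p : s.offDiag => DFunLike.ne_iff.1 p.2.2.2
  refine ⟨range w, finite_range w, fun f hf g hg hfg => ?_⟩
  by_contra hne
  exact hw ⟨(f, g), hf, hg, hne⟩ (hfg (mem_range_self _))

theorem exists_finite_superset_mapsTo {ι α : Type*} (f : ι → α → α) {I : Set ι} (hI : I.Finite)
    {S : Set α} (hS : S.Finite) :
    ∃ T : Set α, T.Finite ∧ S ⊆ T ∧ ∀ i ∈ I, MapsTo (f i) S T :=
  ⟨S ∪ image2 f I S, hS.union (hI.image2 f hS), subset_union_left,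
    fun _ hi _ hx => Or.inr (mem_image2_of_mem hi hx)⟩

theorem exists_perm_semiconj_of_injOn {α β : Type*} {p : Perm α} {S : Set α} {φ : α → β}
    (hp : ∀ x, p x ∈ S ↔ x ∈ S) (hφ : InjOn φ S) :
    ∃ τ : Perm β, (∀ x ∈ S, τ (φ x) = φ (p x)) ∧ ∀ y ∉ φ '' S, τ y = y := by
  classical
  let e : S ≃ φ '' S := Equiv.Set.imageOfInjOn φ S hφ
  exact ⟨(p.subtypePerm hp).extendDomain e,
    fun x hx => (p.subtypePerm hp).extendDomain_apply_image e ⟨x, hx⟩,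
    fun y hy => (p.subtypePerm hp).extendDomain_apply_not_subtype e hy⟩

section AlmostTranslations

variable {K : Type*} [Group K]

theorem eventually_mul_apply_eq {σ τ : Perm K} {k l : K}
    (hσ : ∀ᶠ x in cofinite, σ x = k * x) (hτ : ∀ᶠ x in cofinite, τ x = l * x) :
    ∀ᶠ x in cofinite, (σ * τ) x = k * l * x := by
  filter_upwards [hτ, τ.injective.tendsto_cofinite.eventually hσ] with x hτx hστx
  rw [Equiv.Perm.mul_apply, hστx, hτx, mul_assoc]

theorem eventually_inv_apply_eq {σ : Perm K} {k : K} (hσ : ∀ᶠ x in cofinite, σ x = k * x) :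
    ∀ᶠ x in cofinite, σ⁻¹ x = k⁻¹ * x := by
  filter_upwards [σ⁻¹.injective.tendsto_cofinite.eventually hσ] with x hx
  exact eq_inv_mul_of_mul_eq (hx.symm.trans (σ.apply_symm_apply x))

variable (K) in
/-- The group of permutations of `K` that agree with a left translation at all but finitely many
points. It contains the group `Q` of the theorem, and its elements have a translation part. -/
def almostTranslations : Subgroup (Perm K) where
  carrier := {σ | ∃ k : K, ∀ᶠ x in cofinite, σ x = k * x}
  one_mem' := ⟨1, by simp⟩
  mul_mem' := fun ⟨k, hσ⟩ ⟨l, hτ⟩ => ⟨k * l, eventually_mul_apply_eq hσ hτ⟩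
  inv_mem' := fun ⟨k, hσ⟩ => ⟨k⁻¹, eventually_inv_apply_eq hσ⟩

variable (K) in
theorem finitaryWithTranslations_le_almostTranslations :
    finitaryWithTranslations K ≤ almostTranslations K := by
  refine (Subgroup.closure_le _).2 (union_subset (fun σ hσ => ⟨1, ?_⟩) ?_)
  · simpa only [one_mul] using eventually_cofinite.2 hσ
  · rintro _ ⟨g, rfl⟩
    exact ⟨g, Eventually.of_forall fun x => rfl⟩

variable (K) in
theorem exists_translationPart :
    ∃ k : almostTranslations K →* K,
      ∀ σ : almostTranslations K, ∀ᶠ x in cofinite, (σ : Perm K) x = k σ * x := by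
  -- On a finite group every `k` is a translation part of every permutation.
  rcases finite_or_infinite K with _ | _
  · exact ⟨1, fun σ => by simp [cofinite_eq_bot]⟩
  · choose k hk using fun σ : almostTranslations K => σ.2
    refine ⟨MonoidHom.mk' k fun σ τ => ?_, hk⟩
    obtain ⟨x, hx, hx'⟩ := ((hk (σ * τ)).and (eventually_mul_apply_eq (hk σ) (hk τ))).exists
    exact mul_right_cancel (hx.symm.trans hx')

end AlmostTranslations

section Models

variable {K H : Type*} [Group H] {φ : K → H} {S R T : Set K}

/-- `τ` is a model in `H`, along `φ : K → H`, of a permutation `σ` of `K` with translation part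
`k`: it follows `σ` on the image of `T` and is the translation by `φ k` off the image of `S`.
Here `S` is meant to contain the points where `σ` is not the translation by `k`. Taking `T` larger
than `S` makes the two regions overlap, which leaves room to compose models. -/
structure IsPermModel (φ : K → H) (S T : Set K) (σ : Perm K) (k : K) (τ : Perm H) : Prop where
  apply_map : ∀ x ∈ T, τ (φ x) = φ (σ x)
  apply_eq_mul : ∀ y ∉ φ '' S, τ y = φ k * y

theorem IsPermModel.eqOn {σ₁ σ₂ : Perm K} {k₁ k₂ : K} {τ : Perm H}
    (h₁ : IsPermModel φ S T σ₁ k₁ τ) (h₂ : IsPermModel φ S T σ₂ k₂ τ) (hφ : InjOn φ T)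
    (hRT : R ⊆ T) (hσ₁ : MapsTo σ₁ R T) (hσ₂ : MapsTo σ₂ R T) : EqOn σ₁ σ₂ R := fun x hx =>
  hφ (hσ₁ hx) (hσ₂ hx) ((h₁.apply_map x (hRT hx)).symm.trans (h₂.apply_map x (hRT hx)))

variable [Group K]

theorem inv_mul_apply_mem_iff {σ : Perm K} {k : K} (hσ : ∀ x ∉ S, σ x = k * x) (x : K) :
    k⁻¹ * σ x ∈ S ↔ x ∈ S := by
  refine ⟨fun h => ?_, fun hx => ?_⟩
  · by_contra hx
    rw [hσ x hx, inv_mul_cancel_left] at h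
    exact hx h
  · by_contra h
    have hfix : σ (k⁻¹ * σ x) = σ x := by rw [hσ _ h, mul_inv_cancel_left]
    rw [σ.injective hfix] at h
    exact h hx

theorem exists_isPermModel {σ : Perm K} {k : K} (hσ : ∀ x ∉ S, σ x = k * x) (hST : S ⊆ T)
    (hφ : InjOn φ T) (hk : ∀ x ∈ T, φ (k * x) = φ k * φ x) :
    ∃ τ : Perm H, IsPermModel φ S T σ k τ := by
  have hmem : ∀ x, ((Equiv.mulLeft k)⁻¹ * σ) x ∈ S ↔ x ∈ S := inv_mul_apply_mem_iff hσ
  obtain ⟨τ, hτ, hτ'⟩ := exists_perm_semiconj_of_injOn hmem (hφ.mono hST)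
  refine ⟨Equiv.mulLeft (φ k) * τ, fun x hx => ?_, fun y hy => ?_⟩
  · change φ k * τ (φ x) = φ (σ x)
    by_cases hxS : x ∈ S
    · have hσx : k⁻¹ * σ x ∈ T := hST ((inv_mul_apply_mem_iff hσ x).2 hxS)
      calc φ k * τ (φ x) = φ k * φ (k⁻¹ * σ x) := congrArg _ (hτ x hxS)
        _ = φ (σ x) := by rw [← hk _ hσx, mul_inv_cancel_left]
    · have hφx : φ x ∉ φ '' S := fun h => hxS ((hφ.mem_image_iff hST hx).1 h)
      rw [hτ' _ hφx, ← hk x hx, hσ x hxS]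
  · exact congrArg (φ k * ·) (hτ' y hy)

theorem IsPermModel.mul_eq {σ₁ σ₂ : Perm K} {k₁ k₂ : K} {τ₁ τ₂ τ : Perm H}
    (h₁ : IsPermModel φ S T σ₁ k₁ τ₁) (h₂ : IsPermModel φ S T σ₂ k₂ τ₂)
    (h : IsPermModel φ S T (σ₁ * σ₂) (k₁ * k₂) τ) (hSR : S ⊆ R) (hRT : R ⊆ T)
    (hσ₂ : MapsTo σ₂ R T) (hk₂ : MapsTo (k₂⁻¹ * ·) S R)
    (hφ : ∀ x ∈ R, φ (k₂ * x) = φ k₂ * φ x) (hφk : φ (k₁ * k₂) = φ k₁ * φ k₂) :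
    τ = τ₁ * τ₂ := by
  ext y
  rw [Equiv.Perm.mul_apply]
  by_cases hy : y ∈ φ '' R
  · obtain ⟨x, hx, rfl⟩ := hy
    rw [h.apply_map x (hRT hx), h₂.apply_map x (hRT hx), h₁.apply_map _ (hσ₂ hx),
      Equiv.Perm.mul_apply]
  · have hyS : y ∉ φ '' S := fun hyS => hy (image_mono hSR hyS)
    have hk₂y : φ k₂ * y ∉ φ '' S := by
      rintro ⟨s, hs, hsy⟩
      refine hy ⟨k₂⁻¹ * s, hk₂ hs, mul_left_cancel (a := φ k₂) ?_⟩
      rw [← hφ _ (hk₂ hs), mul_inv_cancel_left, hsy]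
    rw [h.apply_eq_mul y hyS, h₂.apply_eq_mul y hyS, h₁.apply_eq_mul _ hk₂y, hφk, mul_assoc]

end Models

theorem exists_finite_forall_notMem_eq_mul {K ι : Type*} [Group K] {σ : ι → Perm K} {k : ι → K}
    (hσ : ∀ i, ∀ᶠ x in cofinite, σ i x = k i * x) {E : Set ι} (hE : E.Finite) :
    ∃ S : Set K, S.Finite ∧ ∀ i ∈ E, ∀ x ∉ S, σ i x = k i * x := by
  refine ⟨_, eventually_cofinite.1 (hE.eventually_all.2 fun i _ => hσ i), fun i hi x hx => ?_⟩
  exact not_not.1 hx i hi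

theorem IsLEF.of_translationPart {K : Type*} [Group K] (hK : IsLEF K) {Q : Subgroup (Perm K)}
    (k : Q →* K) (hk : ∀ σ : Q, ∀ᶠ x in cofinite, (σ : Perm K) x = k σ * x) : IsLEF Q := by
  intro F
  have hF := F.finite_toSet
  let E : Set Q := ↑F ∪ image2 (· * ·) ↑F ↑F
  have hE : E.Finite := hF.union (hF.image2 _ hF)
  have hFE : ∀ f ∈ F, f ∈ E := fun f hf => Or.inl hf
  obtain ⟨S, hS, hSE⟩ := exists_finite_forall_notMem_eq_mul hk hE
  obtain ⟨W, hW, hWF⟩ := exists_finite_forall_eqOn_imp_eq (hF.image Subtype.val)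
  obtain ⟨R, hR, hSWR, hkR⟩ :=
    exists_finite_superset_mapsTo (fun (f : Q) x => (k f)⁻¹ * x) hF (hS.union hW)
  obtain ⟨T, hT, hRT, hFT⟩ := exists_finite_superset_mapsTo (fun (f : Q) => f.1) hF hR
  obtain ⟨hSR, hWR⟩ := union_subset_iff.1 hSWR
  obtain ⟨H, _, _, φ, hφ, hφmul⟩ := hK.exists_injOn_of_finite ((hE.image k).union hT)
  have hkE : ∀ f ∈ E, k f ∈ k '' E ∪ T := fun f hf => Or.inl (mem_image_of_mem k hf)
  have hφT : InjOn φ T := hφ.mono subset_union_right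
  have hφk : ∀ f ∈ E, ∀ x ∈ T, φ (k f * x) = φ (k f) * φ x := fun f hf x hx =>
    hφmul _ (hkE f hf) _ (Or.inr hx)
  choose! Ψ hΨ using fun f (hf : f ∈ E) =>
    exists_isPermModel (hSE f hf) (hSR.trans hRT) hφT (hφk f hf)
  refine ⟨Perm H, inferInstance, inferInstance, Ψ, fun f hf g hg hfg => ?_, fun f hf g hg => ?_⟩
  · have hfgR : EqOn f.1 g.1 R := (hΨ f (hFE f hf)).eqOn (hfg ▸ hΨ g (hFE g hg)) hφT hRT
      (hFT f hf) (hFT g hg)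
    exact Subtype.ext (hWF f (mem_image_of_mem _ hf) g (mem_image_of_mem _ hg) (hfgR.mono hWR))
  · have hfg : IsPermModel φ S T (f.1 * g.1) (k f * k g) (Ψ (f * g)) :=
      map_mul k f g ▸ hΨ (f * g) (Or.inr ⟨f, hf, g, hg, rfl⟩)
    exact (hΨ f (hFE f hf)).mul_eq (hΨ g (hFE g hg)) hfg hSR hRT (hFT g hg)
      ((hkR g hg).mono_left subset_union_left) (fun x hx => hφk g (hFE g hg) x (hRT hx))
      (hφmul _ (hkE f (hFE f hf)) _ (hkE g (hFE g hg)))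

theorem lef_finitaryWithTranslations_general {K : Type*} [Group K] (hK : IsLEF K) :
    IsLEF (finitaryWithTranslations K) := by
  obtain ⟨k, hk⟩ := exists_translationPart K
  have hle := finitaryWithTranslations_le_almostTranslations K
  exact hK.of_translationPart (k.comp (Subgroup.inclusion hle)) fun σ =>
    hk (Subgroup.inclusion hle σ)

/-- If `K` is a finitely generated residually finite group, then the group `Q` generated by the
finitary permutations of `K` and the left translations by elements of `K` is an LEF group:
for every finite subset `F ⊆ Q` there are a finite group `H` and a map `Ψ : Q → H` injective
on `F` with `Ψ(fg) = Ψ(f)Ψ(g)` for all `f, g ∈ F`. -/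
theorem lef_finitaryWithTranslations {K : Type*} [Group K] (hfg : Group.FG K)
    (hrf : ∀ g : K, g ≠ 1 → ∃ (H : Type) (_ : Group H) (_ : Finite H) (φ : K →* H), φ g ≠ 1) :
    ∀ F : Finset (finitaryWithTranslations K),
      ∃ (H : Type) (_ : Group H) (_ : Finite H) (Ψ : finitaryWithTranslations K → H),
        Set.InjOn Ψ ↑F ∧ ∀ f ∈ F, ∀ g ∈ F, Ψ (f * g) = Ψ f * Ψ g := by
  have := Group.residuallyFinite_of_forall_exists_finite_monoidHom hrf
  exact lef_finitaryWithTranslations_general (IsLEF.of_residuallyFinite K)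
end
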